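/- Let g : M₃(ℝ) → M₃(ℝ) be the map g(G) = (det(I + G) − 1) · cof(I + G). Then g is differentiable, and there exists a constant C > 0 such that for all real 3×3 matrices G and A: (Dg(G)[A]) : A ≥ (tr A)² − C (‖G‖ + ‖G‖² + ‖G‖³ + ‖G‖⁴) ‖A‖². -/

import Mathlib

/-!
Since `g` is the gradient of `½ (det (1 + G) - 1)²`, the form `Dg(G)[A] : A` is its second
derivative `(D det(1 + G)[A])² + (det (1 + G) - 1) D² det(1 + G)[A, A]`, which is `(tr A)²` at
`G = 0`. As `det` is multilinear in the `n` rows, its `k`-th derivative at `1 + G` is bounded by a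
multiple of `(1 + ‖G‖) ^ (n - k)`. By the mean value inequality the deviation from `(tr A)²` is
therefore bounded below by a multiple of `-‖G‖ (1 + ‖G‖) ^ (2 n - 3) ‖A‖²`. Here `‖·‖` is the
largest absolute value of an entry, which the Frobenius norm dominates.
-/

open Matrix BigOperators

attribute [local instance] Matrix.normedAddCommGroup Matrix.normedSpace

/-- Squared Frobenius norm of a real 3×3 matrix. -/
noncomputable def frobSq (A : Matrix (Fin 3) (Fin 3) ℝ) : ℝ := ∑ i, ∑ j, (A i j) ^ 2

/-- Frobenius norm of a real 3×3 matrix. -/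
noncomputable def fro (A : Matrix (Fin 3) (Fin 3) ℝ) : ℝ := Real.sqrt (frobSq A)

/-- The cofactor matrix of a 3×3 matrix: the transpose of the adjugate, so that
`F * (cof F)ᵀ = det F • 1`. -/
noncomputable def cof (F : Matrix (Fin 3) (Fin 3) ℝ) : Matrix (Fin 3) (Fin 3) ℝ :=
  (Matrix.adjugate F)ᵀ

/-- The quasi-incompressibility map `g(G) = (det(I+G) − 1)·cof(I+G)`. -/
noncomputable def gQinc (G : Matrix (Fin 3) (Fin 3) ℝ) : Matrix (Fin 3) (Fin 3) ℝ :=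
  (Matrix.det (1 + G) - 1) • cof (1 + G)

section Multilinear

variable {𝕜 ι : Type*} [NontriviallyNormedField 𝕜] [Fintype ι] {E : ι → Type*}
  [∀ i, NormedAddCommGroup (E i)] [∀ i, NormedSpace 𝕜 (E i)]
  {F : Type*} [NormedAddCommGroup F] [NormedSpace 𝕜 F]

lemma norm_fderiv_multilinear_le (f : ContinuousMultilinearMap 𝕜 E F) (x : ∀ i, E i) :
    ‖fderiv 𝕜 f x‖ ≤ Fintype.card ι * ‖f‖ * ‖x‖ ^ (Fintype.card ι - 1) := by
  simpa [norm_iteratedFDeriv_one] using f.norm_iteratedFDeriv_le 1 x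

lemma norm_fderiv_fderiv_multilinear_le (f : ContinuousMultilinearMap 𝕜 E F) (x : ∀ i, E i) :
    ‖fderiv 𝕜 (fderiv 𝕜 f) x‖ ≤
      (Fintype.card ι).descFactorial 2 * ‖f‖ * ‖x‖ ^ (Fintype.card ι - 2) := by
  rw [← norm_iteratedFDeriv_one, norm_iteratedFDeriv_fderiv]
  exact f.norm_iteratedFDeriv_le 2 x

lemma norm_multilinear_sub_le (f : ContinuousMultilinearMap 𝕜 E F) {x y : ∀ i, E i} {r : ℝ}
    (hx : ‖x‖ ≤ r) (hy : ‖y‖ ≤ r) :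
    ‖f x - f y‖ ≤ Fintype.card ι * ‖f‖ * r ^ (Fintype.card ι - 1) * ‖x - y‖ := by
  calc ‖f x - f y‖
      ≤ ‖f‖ * Fintype.card ι * max ‖x‖ ‖y‖ ^ (Fintype.card ι - 1) * ‖x - y‖ :=
        f.norm_image_sub_le x y
    _ ≤ ‖f‖ * Fintype.card ι * r ^ (Fintype.card ι - 1) * ‖x - y‖ := by
        gcongr
        exact max_le hx hy
    _ = _ := by ring

end Multilinear

section RealMultilinear

variable {ι : Type*} [Fintype ι] {E : ι → Type*} [∀ i, NormedAddCommGroup (E i)]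
  [∀ i, NormedSpace ℝ (E i)] {F : Type*} [NormedAddCommGroup F] [NormedSpace ℝ F]

lemma norm_fderiv_multilinear_sub_le (f : ContinuousMultilinearMap ℝ E F) {x y : ∀ i, E i} {r : ℝ}
    (hx : ‖x‖ ≤ r) (hy : ‖y‖ ≤ r) :
    ‖fderiv ℝ f x - fderiv ℝ f y‖ ≤
      (Fintype.card ι).descFactorial 2 * ‖f‖ * r ^ (Fintype.card ι - 2) * ‖x - y‖ := by
  have hdiff : Differentiable ℝ (fderiv ℝ f) :=
    (f.contDiff.fderiv_right (m := 1) le_top).differentiable one_ne_zero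
  refine (convex_closedBall (0 : ∀ i, E i) r).norm_image_sub_le_of_norm_fderiv_le
    (fun z _ ↦ hdiff z) (fun z hz ↦ ?_) (by simpa using hy) (by simpa using hx)
  have hz : ‖z‖ ≤ r := by simpa using hz
  exact (norm_fderiv_fderiv_multilinear_le f z).trans (by gcongr)

/-- The right-hand side is the second derivative of `½ (f - f p)²` at `p + x` in the direction
`(a, a)`. -/
theorem sq_fderiv_sub_le_hessian (f : ContinuousMultilinearMap ℝ E ℝ) (p x a : ∀ i, E i) :
    fderiv ℝ f p a ^ 2 - 3 * Fintype.card ι * (Fintype.card ι).descFactorial 2 * ‖f‖ ^ 2 *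
        (‖x‖ * (‖p‖ + ‖x‖) ^ (2 * Fintype.card ι - 3)) * ‖a‖ ^ 2 ≤
      fderiv ℝ f (p + x) a ^ 2 + (f (p + x) - f p) * fderiv ℝ (fderiv ℝ f) (p + x) a a := by
  set d := Fintype.card ι
  set r := ‖p‖ + ‖x‖
  have hp : ‖p‖ ≤ r := le_add_of_nonneg_right (norm_nonneg x)
  have hpx : ‖p + x‖ ≤ r := norm_add_le p x
  have hpow : r ^ (2 * d - 3) = r ^ (d - 1) * r ^ (d - 2) := by
    rw [← pow_add]; congr 1; omega
  have hfirst : |fderiv ℝ f p a| ≤ d * ‖f‖ * r ^ (d - 1) * ‖a‖ :=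
    (fderiv ℝ f p).le_of_opNorm_le ((norm_fderiv_multilinear_le f p).trans (by gcongr)) a
  have hfirst_sub : |fderiv ℝ f (p + x) a - fderiv ℝ f p a| ≤
      d.descFactorial 2 * ‖f‖ * r ^ (d - 2) * ‖x‖ * ‖a‖ :=
    (fderiv ℝ f (p + x) - fderiv ℝ f p).le_of_opNorm_le
      (by simpa using norm_fderiv_multilinear_sub_le f hpx hp) a
  have hvalue : |f (p + x) - f p| ≤ d * ‖f‖ * r ^ (d - 1) * ‖x‖ := by
    simpa using norm_multilinear_sub_le f hpx hp
  have hsecond : |fderiv ℝ (fderiv ℝ f) (p + x) a a| ≤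
      d.descFactorial 2 * ‖f‖ * r ^ (d - 2) * ‖a‖ * ‖a‖ :=
    ContinuousLinearMap.le_of_opNorm₂_le_of_le _
      ((norm_fderiv_fderiv_multilinear_le f _).trans (by gcongr)) le_rfl le_rfl
  -- With `Df(p + x)[a] = c + l`, where `c = Df(p)[a]`, the square is at least `c² - 2 |c l|`.
  -- The bounds on `|c l|` and on the remaining product agree, whence the factor `3`.
  have hcross := neg_le_of_abs_le <| (abs_mul _ _).trans_le <|
    mul_le_mul hfirst hfirst_sub (abs_nonneg _) (by positivity)
  have hrest := neg_le_of_abs_le <| (abs_mul _ _).trans_le <|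
    mul_le_mul hvalue hsecond (abs_nonneg _) (by positivity)
  rw [hpow]
  linarith [sq_nonneg (fderiv ℝ f (p + x) a - fderiv ℝ f p a)]

end RealMultilinear

section Determinant

variable {𝕜 n : Type*} [NontriviallyNormedField 𝕜] [Fintype n] [DecidableEq n]

/-- The determinant as a continuous multilinear function of the rows, so that norm estimates for
continuous multilinear maps apply to it. -/
noncomputable def detMultilinear (𝕜 n : Type*) [NontriviallyNormedField 𝕜] [Fintype n]
    [DecidableEq n] : ContinuousMultilinearMap 𝕜 (fun _ : n ↦ n → 𝕜) 𝕜 where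
  toMultilinearMap := detRowAlternating.toMultilinearMap
  cont := continuous_id.matrix_det

lemma contDiff_det {k : WithTop ℕ∞} : ContDiff 𝕜 k (det : Matrix n n 𝕜 → 𝕜) :=
  (detMultilinear 𝕜 n).contDiff

lemma differentiable_fderiv_det : Differentiable 𝕜 (fderiv 𝕜 (det : Matrix n n 𝕜 → 𝕜)) :=
  (contDiff_det.fderiv_right (m := 1) le_top).differentiable one_ne_zero

lemma det_updateRow_eq_sum_cofactor (F : Matrix n n 𝕜) (i : n) (v : n → 𝕜) :
    det (F.updateRow i v) = ∑ j, (adjugate F)ᵀ i j * v j := by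
  simp_rw [det_eq_sum_mul_adjugate_row (F.updateRow i v) i, updateRow_self, transpose_apply,
    adjugate_apply, updateRow_idem, mul_comm]

theorem fderiv_det_apply (F A : Matrix n n 𝕜) :
    fderiv 𝕜 det F A = ∑ i, ∑ j, (adjugate F)ᵀ i j * A i j := by
  calc fderiv 𝕜 det F A = (detMultilinear 𝕜 n).linearDeriv F A :=
        DFunLike.congr_fun ((detMultilinear 𝕜 n).hasFDerivAt F).fderiv A
    _ = ∑ i, det (F.updateRow i (A i)) := (detMultilinear 𝕜 n).linearDeriv_apply F A
    _ = _ := Finset.sum_congr rfl fun i _ ↦ det_updateRow_eq_sum_cofactor F i (A i)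

lemma fderiv_det_one (A : Matrix n n 𝕜) : fderiv 𝕜 det 1 A = trace A := by
  simp [fderiv_det_apply, one_apply, trace]

lemma fderiv_det_single (F : Matrix n n 𝕜) (i j : n) :
    fderiv 𝕜 det F (single i j 1) = (adjugate F)ᵀ i j := by
  simp [fderiv_det_apply, single_apply, ite_and]

end Determinant

section QuasiIncompressible

variable {n : Type*} [Fintype n] [DecidableEq n]

lemma sq_fderiv_det_sub_le_hessian (P G A : Matrix n n ℝ) :
    fderiv ℝ det P A ^ 2 - 3 * Fintype.card n * (Fintype.card n).descFactorial 2 *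
        ‖detMultilinear ℝ n‖ ^ 2 * (‖G‖ * (‖P‖ + ‖G‖) ^ (2 * Fintype.card n - 3)) * ‖A‖ ^ 2 ≤
      fderiv ℝ det (P + G) A ^ 2 +
        (det (P + G) - det P) * fderiv ℝ (fderiv ℝ det) (P + G) A A :=
  sq_fderiv_sub_le_hessian (detMultilinear ℝ n) P G A

/-- The quasi-incompressibility map `G ↦ (det (1 + G) - 1) cof (1 + G)` in any dimension, with the
cofactor matrix written as the transposed adjugate; `gQinc` is the case `n = Fin 3`. It is the
gradient of `½ (det (1 + G) - 1)²`. -/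
noncomputable def quasiIncompressibleMap (G : Matrix n n ℝ) : Matrix n n ℝ :=
  (det (1 + G) - 1) • (adjugate (1 + G))ᵀ

lemma quasiIncompressibleMap_pairing (G A : Matrix n n ℝ) :
    ∑ i, ∑ j, quasiIncompressibleMap G i j * A i j =
      (det (1 + G) - 1) * fderiv ℝ det (1 + G) A := by
  simp [quasiIncompressibleMap, fderiv_det_apply, Finset.mul_sum, mul_assoc]

lemma differentiable_quasiIncompressibleMap :
    Differentiable ℝ (quasiIncompressibleMap : Matrix n n ℝ → Matrix n n ℝ) := by
  have hdet : Differentiable ℝ (det : Matrix n n ℝ → ℝ) := contDiff_det.differentiable one_ne_zero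
  refine differentiable_pi.2 fun i ↦ differentiable_pi.2 fun j ↦ ?_
  simp only [quasiIncompressibleMap, Matrix.smul_apply, smul_eq_mul, ← fderiv_det_single]
  have hshift : Differentiable ℝ fun G : Matrix n n ℝ ↦ 1 + G := differentiable_id.const_add 1
  exact ((hdet.comp hshift).sub_const 1).mul
    ((differentiable_fderiv_det.comp hshift).clm_apply (differentiable_const _))

theorem fderiv_quasiIncompressibleMap_pairing (G A : Matrix n n ℝ) :
    ∑ i, ∑ j, fderiv ℝ quasiIncompressibleMap G A i j * A i j =
      fderiv ℝ det (1 + G) A ^ 2 +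
        (det (1 + G) - 1) * fderiv ℝ (fderiv ℝ det) (1 + G) A A := by
  have hdet : HasFDerivAt (fun H ↦ det (1 + H) - 1) (fderiv ℝ det (1 + G)) G :=
    ((hasFDerivAt_comp_add_left 1).2
      (contDiff_det.differentiable one_ne_zero (1 + G)).hasFDerivAt).sub_const 1
  have hcof : HasFDerivAt (fun H ↦ fderiv ℝ det (1 + H) A)
      (ContinuousLinearMap.apply ℝ ℝ A ∘L fderiv ℝ (fderiv ℝ det) (1 + G)) G :=
    (ContinuousLinearMap.apply ℝ ℝ A).hasFDerivAt.comp G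
      ((hasFDerivAt_comp_add_left 1).2 (differentiable_fderiv_det (1 + G)).hasFDerivAt)
  let pairing : Matrix n n ℝ →L[ℝ] ℝ :=
    LinearMap.toContinuousLinearMap (∑ i, ∑ j, A i j • entryLinearMap ℝ ℝ i j)
  have pairing_apply (X : Matrix n n ℝ) : pairing X = ∑ i, ∑ j, X i j * A i j := by
    simp [pairing, mul_comm]
  have hpairing := (pairing.hasFDerivAt.comp G
    (differentiable_quasiIncompressibleMap G).hasFDerivAt).unique <|
      (hdet.mul hcof).congr_of_eventuallyEq <| .of_forall fun H ↦
        (pairing_apply _).trans (quasiIncompressibleMap_pairing H A)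
  calc _ = pairing (fderiv ℝ quasiIncompressibleMap G A) := (pairing_apply _).symm
    _ = (det (1 + G) - 1) * fderiv ℝ (fderiv ℝ det) (1 + G) A A +
          fderiv ℝ det (1 + G) A * fderiv ℝ det (1 + G) A :=
      DFunLike.congr_fun hpairing A
    _ = _ := by ring

lemma norm_one_matrix_le : ‖(1 : Matrix n n ℝ)‖ ≤ 1 :=
  (norm_diagonal (1 : n → ℝ)).trans_le <| (pi_norm_const_le (1 : ℝ)).trans_eq norm_one

theorem quasi_incompressible_coercivity_general :
    Differentiable ℝ (quasiIncompressibleMap : Matrix n n ℝ → Matrix n n ℝ) ∧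
      ∃ C : ℝ, 0 < C ∧ ∀ G A : Matrix n n ℝ,
        ∑ i, ∑ j, fderiv ℝ quasiIncompressibleMap G A i j * A i j ≥
          trace A ^ 2 - C * (‖G‖ * (1 + ‖G‖) ^ (2 * Fintype.card n - 3)) * ‖A‖ ^ 2 := by
  refine ⟨differentiable_quasiIncompressibleMap, 3 * Fintype.card n *
    (Fintype.card n).descFactorial 2 * ‖detMultilinear ℝ n‖ ^ 2 + 1, by positivity, fun G A ↦ ?_⟩
  have hessian := sq_fderiv_det_sub_le_hessian 1 G A
  rw [det_one, fderiv_det_one] at hessian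
  rw [fderiv_quasiIncompressibleMap_pairing]
  refine hessian.trans' ?_
  gcongr
  · exact (lt_add_one _).le
  · exact norm_one_matrix_le

end QuasiIncompressible

lemma norm_le_fro (A : Matrix (Fin 3) (Fin 3) ℝ) : ‖A‖ ≤ fro A := by
  refine (norm_le_iff (Real.sqrt_nonneg _)).2 fun i j ↦ Real.abs_le_sqrt ?_
  calc A i j ^ 2 ≤ ∑ j, A i j ^ 2 :=
        Finset.single_le_sum (f := fun j ↦ A i j ^ 2) (fun _ _ ↦ sq_nonneg _) (Finset.mem_univ j)
    _ ≤ frobSq A := Finset.single_le_sum (f := fun i ↦ ∑ j, A i j ^ 2)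
        (fun _ _ ↦ Finset.sum_nonneg fun _ _ ↦ sq_nonneg _) (Finset.mem_univ i)

lemma frobSq_nonneg (A : Matrix (Fin 3) (Fin 3) ℝ) : 0 ≤ frobSq A :=
  Finset.sum_nonneg fun _ _ ↦ Finset.sum_nonneg fun _ _ ↦ sq_nonneg _

lemma norm_growth_mul_sq_le_fro (G A : Matrix (Fin 3) (Fin 3) ℝ) :
    ‖G‖ * (1 + ‖G‖) ^ 3 * ‖A‖ ^ 2 ≤
      3 * (fro G + fro G ^ 2 + fro G ^ 3 + fro G ^ 4) * frobSq A := by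
  have hG : 0 ≤ fro G := Real.sqrt_nonneg _
  have hA : ‖A‖ ^ 2 ≤ frobSq A :=
    (Real.le_sqrt (norm_nonneg A) (frobSq_nonneg A)).1 (norm_le_fro A)
  calc ‖G‖ * (1 + ‖G‖) ^ 3 * ‖A‖ ^ 2 ≤ fro G * (1 + fro G) ^ 3 * frobSq A := by
        gcongr <;> exact norm_le_fro G
    _ ≤ 3 * (fro G + fro G ^ 2 + fro G ^ 3 + fro G ^ 4) * frobSq A := by
        gcongr ?_ * frobSq A
        · exact frobSq_nonneg A
        · linarith [pow_nonneg hG 4]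

/-- `g` is differentiable and its derivative satisfies the coercivity bound
`Dg(G)[A] : A ≥ (tr A)² − C(‖G‖+‖G‖²+‖G‖³+‖G‖⁴)‖A‖²`. -/
theorem quasi_incompressible_coercivity :
    Differentiable ℝ gQinc ∧
      ∃ C : ℝ, 0 < C ∧ ∀ G A : Matrix (Fin 3) (Fin 3) ℝ,
        ∑ i, ∑ j, (fderiv ℝ gQinc G A) i j * A i j
          ≥ (Matrix.trace A) ^ 2
              - C * (fro G + (fro G) ^ 2 + (fro G) ^ 3 + (fro G) ^ 4) * frobSq A := by
  obtain ⟨hdiff, C, hC, hbound⟩ := quasi_incompressible_coercivity_general (n := Fin 3)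
  simp only [Fintype.card_fin, Nat.reduceMul, Nat.reduceSub] at hbound
  exact ⟨hdiff, 3 * C, by positivity, fun G A ↦ (hbound G A).trans' <| by
    linarith [mul_le_mul_of_nonneg_left (norm_growth_mul_sq_le_fro G A) hC.le]⟩
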